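/- Let J ⊆ Δ. Identify ℚ[W^J] and each ℚ[W^{J∪{α}}] with their ℚ-linear duals via the standard bases, so that the dual map ∂* : ℚ[W^J] → ⊕_{α ∈ Δ\J} ℚ[W^{J∪{α}}] of ∂ sends a basis element w' ∈ W^J to the tuple whose α-component is the unique w ∈ W^{J∪{α}} with w W_{J∪{α}} = w' W_{J∪{α}}. For w' ∈ V^J set σ(w') = Σ_{v ∈ W_{Δ\J}} (−1)^{ℓ(v)} (w'v)^J ∈ ℚ[W^J]. Then the family {σ(w') : w' ∈ V^J} is linearly independent over ℚ and is contained in the kernel of ∂*; consequently dim_ℚ M_J(ℚ) ≥ |V^J|. -/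

import Mathlib

/-! Common framework: a reduced (crystallographic) root system `Φ` in a real vector
space `V`, with Weyl group `W` (generated by the reflections `s_α`, `α ∈ Φ`, inside the
group of linear automorphisms of `V`), a base `Δ` of simple roots with positive system
`Pos = Φ⁺`, and the associated combinatorics. -/

open scoped Classical Pointwise

namespace PaperSp

variable {V : Type} [AddCommGroup V] [Module ℝ V]

/-- The data of a reduced crystallographic root system in `V`:  a finite spanning set
`Phi` of nonzero vectors together with, for each root `α`, a linear functional
`pairing α = ⟨·, α∨⟩` taking the value `2` at `α`, such that the associated reflections
`s_α : β ↦ β − ⟨β, α∨⟩α` preserve `Phi`, all pairings are integral, and the only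
multiples of a root `α` which are roots are `±α`. -/
structure RootSystemData (V : Type) [AddCommGroup V] [Module ℝ V] : Type where
  Phi : Set V
  pairing : V → V →ₗ[ℝ] ℝ
  pairing_self : ∀ α, α ∈ Phi → pairing α α = 2
  finite : Phi.Finite
  span_top : Submodule.span ℝ Phi = ⊤
  zero_not_mem : (0 : V) ∉ Phi
  crystallographic : ∀ α ∈ Phi, ∀ β ∈ Phi, ∃ n : ℤ, pairing α β = (n : ℝ)
  reduced : ∀ α ∈ Phi, ∀ t : ℝ, t • α ∈ Phi → t = 1 ∨ t = -1
  reflect_mem : ∀ α ∈ Phi, ∀ β ∈ Phi, β - pairing α β • α ∈ Phi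

/-- The reflection `s_α` associated to a root `α` (the identity if `α ∉ Φ`). -/
noncomputable def RootSystemData.refl (R : RootSystemData V) (α : V) : V ≃ₗ[ℝ] V :=
  if h : α ∈ R.Phi then Module.reflection (R.pairing_self α h) else 1

/-- The set of reflections `{s_α : α ∈ K}` associated to a set `K` of roots. -/
noncomputable def refls (R : RootSystemData V) (K : Set V) : Set (V ≃ₗ[ℝ] V) :=
  {s | ∃ α ∈ K, s = R.refl α}

/-- The Weyl group `W`, generated by all reflections `s_α`, `α ∈ Φ`. -/
noncomputable def weylGroup (R : RootSystemData V) : Subgroup (V ≃ₗ[ℝ] V) :=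
  Subgroup.closure (refls R R.Phi)

/-- The subgroup `W_J` generated by the reflections `s_α`, `α ∈ J`. -/
noncomputable def WsubJ (R : RootSystemData V) (J : Set V) : Subgroup (V ≃ₗ[ℝ] V) :=
  Subgroup.closure (refls R J)

/-- The word length of `w` with respect to a generating set `S` of a group. -/
noncomputable def lengthWrt {G : Type*} [Group G] (S : Set G) (w : G) : ℕ :=
  sInf {n | ∃ ls : List G, ls.length = n ∧ (∀ x ∈ ls, x ∈ S) ∧ ls.prod = w}

/-- The length function `ℓ` on `W` with respect to the simple reflections
`S = {s_α : α ∈ Δ}`. -/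
noncomputable def len (R : RootSystemData V) (Δ : Set V) (w : V ≃ₗ[ℝ] V) : ℕ :=
  lengthWrt (refls R Δ) w

/-- `Pos` and `Δ` form a positive system with base `Δ` for the root system `R`:
`Φ = Pos ⊔ (−Pos)`, `Δ ⊆ Pos` is linearly independent, and every positive root is a
nonnegative integral combination of simple roots. -/
structure IsBase (R : RootSystemData V) (Pos Δ : Set V) : Prop where
  pos_sub : Pos ⊆ R.Phi
  mem_or_neg : ∀ α ∈ R.Phi, α ∈ Pos ∨ -α ∈ Pos
  not_both : ∀ α : V, ¬(α ∈ Pos ∧ -α ∈ Pos)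
  delta_sub : Δ ⊆ Pos
  indep : LinearIndependent ℝ (fun a : Δ => (a : V))
  decomp : ∀ β ∈ Pos, ∃ c : V →₀ ℕ, (c.support : Set V) ⊆ Δ ∧
    β = c.sum (fun a m => (m : ℝ) • a)

/-- The set `W^J = {w ∈ W : w(α) ∈ Φ⁺ for all α ∈ J}` of minimal length representatives
of `W/W_J`. -/
noncomputable def WupJ (R : RootSystemData V) (Pos : Set V) (J : Set V) :
    Set (V ≃ₗ[ℝ] V) :=
  {w | w ∈ weylGroup R ∧ ∀ α ∈ J, w α ∈ Pos}

/-- The set `V^J = W^J \ ⋃_{α ∈ Δ\J} W^{J∪{α}}`. -/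
noncomputable def VupJ (R : RootSystemData V) (Pos Δ : Set V) (J : Set V) :
    Set (V ≃ₗ[ℝ] V) :=
  {w | w ∈ WupJ R Pos J ∧ ∀ α ∈ Δ, α ∉ J → w ∉ WupJ R Pos (J ∪ {α})}

/-- `Φ_J(1) = Φ⁻ \ (Φ⁻ ∩ W_J·J)`. -/
noncomputable def PhiJone (R : RootSystemData V) (Pos : Set V) (J : Set V) : Set V :=
  (R.Phi \ Pos) \ {β | ∃ v ∈ WsubJ R J, ∃ α ∈ J, β = v α}

/-- `Φ_J(w) = w · Φ_J(1)`. -/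
noncomputable def PhiJ (R : RootSystemData V) (Pos : Set V) (J : Set V)
    (w : V ≃ₗ[ℝ] V) : Set V :=
  (fun x => w x) '' (PhiJone R Pos J)

/-- `hProjJ R Pos J pJ` says that `pJ` is the projection `w ↦ (w)^J` sending an element
of `W` to the unique element of `W^J` in the coset `w W_J`. -/
noncomputable def IsProjJ (R : RootSystemData V) (Pos : Set V) (J : Set V)
    (pJ : (V ≃ₗ[ℝ] V) → (V ≃ₗ[ℝ] V)) : Prop :=
  ∀ w ∈ weylGroup R, pJ w ∈ WupJ R Pos J ∧ (pJ w)⁻¹ * w ∈ WsubJ R J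

/-- The product `s_i ⋯ s_1` of the first `i` members of a sequence in a group. -/
noncomputable def chainProd {G : Type*} [Group G] (s : ℕ → G) (i : ℕ) : G :=
  (((List.range' 1 i).map s).reverse).prod

/-- The chain `w^(0) = w`, `w^(i) = (s_i ⋯ s_1 w)^J` associated to `w` and a sequence
of simple reflections. -/
noncomputable def chainElt {G : Type*} [Group G] (pJ : G → G) (s : ℕ → G) (w : G)
    (i : ℕ) : G :=
  if i = 0 then w else pJ (chainProd s i * w)

/-- The partial order `<_J`:  `w <_J w'` iff there are simple reflections
`s_1, …, s_r` (`r ≥ 1`) such that, with `w^(i) = (s_i ⋯ s_1 w)^J`, the lengths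
`ℓ(w^(i))` are strictly increasing and `w^(r) = w'`.  Taking `pJ = id`
(and `J = ∅`) gives the weak left order `<_∅`. -/
noncomputable def ltJ {G : Type*} [Group G] (S : Set G) (ℓ : G → ℕ) (pJ : G → G)
    (w w' : G) : Prop :=
  ∃ r : ℕ, 1 ≤ r ∧ ∃ s : ℕ → G,
    (∀ m, 1 ≤ m → m ≤ r → s m ∈ S) ∧
    (∀ m, 1 ≤ m → m ≤ r → ℓ (chainElt pJ s w (m - 1)) < ℓ (chainElt pJ s w m)) ∧
    chainElt pJ s w r = w'

/-- `w` is the longest element of a subgroup `H` of `W` (with respect to `ℓ`). -/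
noncomputable def IsLongestIn (R : RootSystemData V) (Δ : Set V)
    (H : Subgroup (V ≃ₗ[ℝ] V)) (w : V ≃ₗ[ℝ] V) : Prop :=
  w ∈ H ∧ ∀ v ∈ H, len R Δ v ≤ len R Δ w

end PaperSp

namespace PaperSp

variable {V : Type} [AddCommGroup V] [Module ℝ V]

/-- The index type of the direct sum `⊕_{α ∈ Δ\J} L[W^{J∪{α}}]`. -/
noncomputable def MJdom (R : RootSystemData V) (Pos Δ J : Set V) : Type :=
  Σ a : ↥(Δ \ J), ↥(WupJ R Pos (J ∪ {(a : V)}))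

/-- The map `∂ : ⊕_{α ∈ Δ\J} L[W^{J∪{α}}] → L[W^J]` sending the basis element
`w ∈ W^{J∪{α}}` to the sum of all `w' ∈ W^J` with `w' W_J ⊆ w W_{J∪{α}}`. -/
noncomputable def MJd (R : RootSystemData V) (Pos Δ J : Set V)
    (L : Type) [CommRing L] :
    ((MJdom R Pos Δ J) →₀ L) →ₗ[L] ((↥(WupJ R Pos J)) →₀ L) :=
  Finsupp.lift _ L _ (fun x =>
    ∑ᶠ w' : ↥(WupJ R Pos J),
      if (↑w' : V ≃ₗ[ℝ] V) • ((WsubJ R J : Set (V ≃ₗ[ℝ] V)))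
          ⊆ (↑(x.2) : V ≃ₗ[ℝ] V) • ((WsubJ R (J ∪ {(x.1 : V)}) : Set (V ≃ₗ[ℝ] V)))
        then Finsupp.single w' (1 : L) else 0)

/-- The module `M_J(L)`:  the cokernel of `∂`. -/
noncomputable def MJmod (R : RootSystemData V) (Pos Δ J : Set V)
    (L : Type) [CommRing L] : Type :=
  ((↥(WupJ R Pos J)) →₀ L) ⧸ LinearMap.range (MJd R Pos Δ J L)

noncomputable instance (R : RootSystemData V) (Pos Δ J : Set V)
    (L : Type) [CommRing L] : AddCommGroup (MJmod R Pos Δ J L) :=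
  Submodule.Quotient.addCommGroup _

noncomputable instance (R : RootSystemData V) (Pos Δ J : Set V)
    (L : Type) [CommRing L] : Module L (MJmod R Pos Δ J L) :=
  Submodule.Quotient.module _

/-- The quotient map `∇ : L[W^J] → M_J(L)`. -/
noncomputable def MJnabla (R : RootSystemData V) (Pos Δ J : Set V)
    (L : Type) [CommRing L] :
    ((↥(WupJ R Pos J)) →₀ L) →ₗ[L] MJmod R Pos Δ J L :=
  Submodule.mkQ _

end PaperSp

namespace PaperSp

variable {V : Type} [AddCommGroup V] [Module ℝ V]

/-- The dual map `∂* : ℚ[W^J] → ⊕_{α ∈ Δ\J} ℚ[W^{J∪{α}}]` (with respect to the standard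
bases), sending `w' ∈ W^J` to the tuple whose `α`-component is the unique
`w ∈ W^{J∪{α}}` with `w W_{J∪{α}} = w' W_{J∪{α}}`. -/
noncomputable def MJdstar (R : RootSystemData V) (Pos Δ J : Set V) :
    ((↥(WupJ R Pos J)) →₀ ℚ) →ₗ[ℚ] ((MJdom R Pos Δ J) →₀ ℚ) :=
  Finsupp.lift _ ℚ _ (fun w' =>
    ∑ᶠ a : ↥(Δ \ J), ∑ᶠ w : ↥(WupJ R Pos (J ∪ {(a : V)})),
      if (↑w : V ≃ₗ[ℝ] V) • ((WsubJ R (J ∪ {(a : V)}) : Set (V ≃ₗ[ℝ] V)))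
          = (↑w' : V ≃ₗ[ℝ] V) • ((WsubJ R (J ∪ {(a : V)}) : Set (V ≃ₗ[ℝ] V)))
        then Finsupp.single (⟨a, w⟩ : MJdom R Pos Δ J) (1 : ℚ) else 0)

/-- The element `σ(w') = Σ_{v ∈ W_{Δ\J}} (−1)^{ℓ(v)} (w'v)^J ∈ ℚ[W^J]`. -/
noncomputable def sigmaVec (R : RootSystemData V) (Pos Δ J : Set V)
    (pJ : (V ≃ₗ[ℝ] V) → (V ≃ₗ[ℝ] V)) (w' : V ≃ₗ[ℝ] V) :
    (↥(WupJ R Pos J)) →₀ ℚ :=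
  ∑ᶠ v : ↥(WsubJ R (Δ \ J)), ∑ᶠ u : ↥(WupJ R Pos J),
    if (u : V ≃ₗ[ℝ] V) = pJ (w' * (v : V ≃ₗ[ℝ] V))
      then ((-1 : ℚ) ^ (len R Δ (v : V ≃ₗ[ℝ] V))) • Finsupp.single u (1 : ℚ) else 0

/-!
Let `2ρ` be the sum of the positive roots and let `g` be a functional that is positive on `Δ`; an
element `w` of `W` is measured by the number `g (w 2ρ)`. If a functional `h` is positive on
`K ⊆ Δ` and `1 ≠ v ∈ W_K`, then `h (v 2ρ) < h (2ρ)`: up to signs `v` permutes the positive roots,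
and each sign change flips a root supported on `K`. Taking `h = g ∘ w` with `w` in `W^J` shows that
`w` has the strictly largest measure in its coset `w W_J`. Taking `h = -g ∘ w` with `w` in `V^J`,
which maps `Δ \ J` to negative roots, shows that `w` has the strictly smallest measure in
`w W_{Δ \ J}`. Hence every term of `σ(w)` other than `w` itself has a larger measure than `w`, and
the family `σ` is triangular with ones on the diagonal.

For `α ∈ Δ \ J` the involution `v ↦ v s_α` of `W_{Δ \ J}` reverses signs and preserves the coset of
`w v` modulo `W_{J ∪ {α}}`, so `σ(w)` is in the kernel of `∂*`. Finally `∂*` is the transpose of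
`∂`, so its kernel has the dimension of the cokernel of `∂`.
-/

section General

section AddSubmonoid

variable {M A F : Type*} [AddCommMonoid M] [AddCommMonoid A] [PartialOrder A]
  [IsOrderedAddMonoid A] [FunLike F M A] [AddMonoidHomClass F M A]
  {g : F} {K Δ : Set M} {x : M}

theorem map_nonneg_of_mem_closure (hg : ∀ α ∈ K, 0 ≤ g α) (hx : x ∈ AddSubmonoid.closure K) :
    0 ≤ g x := by
  induction hx using AddSubmonoid.closure_induction with
  | mem α hα => exact hg α hα
  | zero => rw [map_zero]
  | add y z _ _ hy hz => rw [map_add]; exact add_nonneg hy hz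

theorem map_pos_of_mem_closure (hg : ∀ α ∈ K, 0 < g α) (hx : x ∈ AddSubmonoid.closure K)
    (hx0 : x ≠ 0) : 0 < g x := by
  induction hx using AddSubmonoid.closure_induction with
  | mem α hα => exact hg α hα
  | zero => exact absurd rfl hx0
  | add y z _ hz ihy ihz =>
    rcases eq_or_ne y 0 with rfl | hy0
    · rw [zero_add] at hx0 ⊢
      exact ihz hx0
    · rw [map_add]
      exact add_pos_of_pos_of_nonneg (ihy hy0)
        (map_nonneg_of_mem_closure (fun α hα => (hg α hα).le) hz)

theorem mem_closure_of_map_eq_zero (hg : ∀ α ∈ Δ, 0 ≤ g α) (hK : ∀ α ∈ Δ, g α = 0 → α ∈ K)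
    (hx : x ∈ AddSubmonoid.closure Δ) (hgx : g x = 0) : x ∈ AddSubmonoid.closure K := by
  induction hx using AddSubmonoid.closure_induction with
  | mem α hα => exact AddSubmonoid.subset_closure (hK α hα hgx)
  | zero => exact zero_mem _
  | add y z hy hz ihy ihz =>
    rw [map_add, add_eq_zero_iff_of_nonneg (map_nonneg_of_mem_closure hg hy)
      (map_nonneg_of_mem_closure hg hz)] at hgx
    exact add_mem (ihy hgx.1) (ihz hgx.2)

end AddSubmonoid

theorem linearIndependent_of_triangular {ι κ k A : Type*} [Ring k] [NoZeroDivisors k]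
    [LinearOrder A] {f : ι → κ →₀ k} (p : ι → κ) (N : ι → A) (hdiag : ∀ i, f i (p i) ≠ 0)
    (htri : ∀ i j, f j (p i) ≠ 0 → j = i ∨ N j < N i) : LinearIndependent k f := by
  refine linearIndependent_iff'.2 fun s c hsum => ?_
  by_contra! hne
  obtain ⟨i, hi, hmin⟩ := Finset.exists_min_image {i ∈ s | c i ≠ 0} N
    (Finset.filter_nonempty_iff.2 hne)
  rw [Finset.mem_filter] at hi
  have hcoeff : ∑ j ∈ s, c j * f j (p i) = 0 := by
    simpa [Finsupp.finsetSum_apply] using DFunLike.congr_fun hsum (p i)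
  rw [Finset.sum_eq_single_of_mem i hi.1] at hcoeff
  · exact mul_ne_zero hi.2 (hdiag i) hcoeff
  · intro j hj hji
    by_contra hprod
    obtain ⟨hcj, hfj⟩ := mul_ne_zero_iff.1 hprod
    exact (hmin j (Finset.mem_filter.2 ⟨hj, hcj⟩)).not_gt ((htri i j hfj).resolve_left hji)

theorem finrank_ker_eq_finrank_coker_of_adjoint {ι κ k : Type*} [Finite ι] [Finite κ] [Field k]
    {d : (κ →₀ k) →ₗ[k] (ι →₀ k)} {dstar : (ι →₀ k) →ₗ[k] (κ →₀ k)}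
    (hadj : ∀ i j, dstar (.single i 1) j = d (.single j 1) i) :
    Module.finrank k (LinearMap.ker dstar) =
      Module.finrank k ((ι →₀ k) ⧸ LinearMap.range d) := by
  have := Fintype.ofFinite ι
  have := Fintype.ofFinite κ
  let bι : Module.Basis ι k (ι →₀ k) := Finsupp.basisSingleOne
  let bκ : Module.Basis κ k (κ →₀ k) := Finsupp.basisSingleOne
  have htranspose : LinearMap.toMatrix bι bκ dstar = (LinearMap.toMatrix bκ bι d).transpose := by
    ext j i
    simpa [LinearMap.toMatrix_apply, bι, bκ] using hadj i j
  have hrank : Module.finrank k (LinearMap.range dstar) =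
      Module.finrank k (LinearMap.range d) := by
    rw [← Matrix.toLin_toMatrix bι bκ dstar, ← Matrix.toLin_toMatrix bκ bι d,
      ← Matrix.rank_eq_finrank_range_toLin, ← Matrix.rank_eq_finrank_range_toLin, htranspose,
      Matrix.rank_transpose]
  have hker := LinearMap.finrank_range_add_finrank_ker dstar
  have hcoker := Submodule.finrank_quotient_add_finrank (LinearMap.range d)
  omega

theorem finsum_ite_single_apply {ι k : Type*} [Finite ι] [AddCommMonoid k] (p : ι → Prop)
    (a : k) (i : ι) :
    (∑ᶠ j, if p j then Finsupp.single j a else 0) i = if p i then a else 0 := by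
  have := Fintype.ofFinite ι
  rw [finsum_eq_sum_of_fintype, Finsupp.finsetSum_apply, Finset.sum_eq_single_of_mem i (by simp)]
  · split_ifs <;> simp
  · intro j _ hj
    split_ifs <;> simp [hj]

theorem finsum_sigma_of_finite {ι M : Type*} {κ : ι → Type*} [Finite ι] [∀ i, Finite (κ i)]
    [AddCommMonoid M] (f : ∀ i, κ i → M) :
    ∑ᶠ x : Σ i, κ i, f x.1 x.2 = ∑ᶠ i, ∑ᶠ j, f i j := by
  have := Fintype.ofFinite ι
  have (i : ι) := Fintype.ofFinite (κ i)
  simp_rw [finsum_eq_sum_of_fintype]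
  exact Fintype.sum_sigma' f

section Length

variable {G : Type*} [Group G] {S : Set G} {w : G}

theorem lengthWrt_prod_le {l : List G} (hl : ∀ s ∈ l, s ∈ S) : lengthWrt S l.prod ≤ l.length :=
  Nat.sInf_le ⟨l, rfl, hl, rfl⟩

theorem lengthWrt_one : lengthWrt S (1 : G) = 0 :=
  Nat.le_zero.1 (lengthWrt_prod_le (l := []) (by simp))

theorem exists_reduced_word (hw : w ∈ Submonoid.closure S) :
    ∃ l : List G, (∀ s ∈ l, s ∈ S) ∧ l.prod = w ∧ l.length = lengthWrt S w := by
  obtain ⟨l, hl, hprod⟩ := Submonoid.exists_list_of_mem_closure hw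
  obtain ⟨l', hlen, hl', hprod'⟩ := Nat.sInf_mem
    (⟨_, l, rfl, hl, hprod⟩ : {n | ∃ l : List G, l.length = n ∧ (∀ s ∈ l, s ∈ S) ∧
      l.prod = w}.Nonempty)
  exact ⟨l', hl', hprod', hlen⟩

end Length

theorem smul_subset_smul_iff {G : Type*} [Group G] {H H' : Subgroup G} (hH : H ≤ H') {u x : G} :
    u • (H : Set G) ⊆ x • (H' : Set G) ↔ x⁻¹ * u ∈ H' := by
  refine ⟨fun h => ?_, fun h => ?_⟩
  · exact mem_leftCoset_iff x |>.1 (h (mem_own_leftCoset H.toSubmonoid u))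
  · rw [(leftCoset_eq_iff H').2 h]
    exact Set.smul_set_mono hH

end General

namespace RootSystemData

variable (R : RootSystemData V) {α β : V} {K : Set V} {v w : V ≃ₗ[ℝ] V}

theorem refl_apply (hα : α ∈ R.Phi) (x : V) : R.refl α x = x - R.pairing α x • α := by
  simp [RootSystemData.refl, hα, Module.reflection_apply]

theorem refl_apply_self (hα : α ∈ R.Phi) : R.refl α α = -α := by
  simp [RootSystemData.refl, hα, Module.reflection_apply_self]

theorem refl_inv (α : V) : (R.refl α)⁻¹ = R.refl α := by
  unfold RootSystemData.refl
  split_ifs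
  · exact Module.reflection_inv _
  · exact inv_one

theorem refl_mul_self (α : V) : R.refl α * R.refl α = 1 := by
  rw [mul_eq_one_iff_inv_eq, refl_inv]

theorem ne_zero_of_mem_Phi (hα : α ∈ R.Phi) : α ≠ 0 :=
  ne_of_mem_of_not_mem hα R.zero_not_mem

include R in
theorem module_finite : Module.Finite ℝ V :=
  ⟨Submodule.fg_def.2 ⟨R.Phi, R.finite, R.span_top⟩⟩

theorem refl_mem_WsubJ (hα : α ∈ K) : R.refl α ∈ WsubJ R K :=
  Subgroup.subset_closure ⟨α, hα, rfl⟩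

theorem WsubJ_mono {K' : Set V} (hK : K ⊆ K') : WsubJ R K ≤ WsubJ R K' :=
  Subgroup.closure_mono fun _ ⟨α, hα, h⟩ => ⟨α, hK hα, h⟩

theorem mem_submonoidClosure_of_mem_WsubJ (hv : v ∈ WsubJ R K) :
    v ∈ Submonoid.closure (refls R K) := by
  have hinv : (refls R K)⁻¹ ⊆ refls R K := by
    rintro s ⟨α, hα, hs⟩
    exact ⟨α, hα, by rw [← R.refl_inv, ← hs, inv_inv]⟩
  rwa [WsubJ, ← Subgroup.mem_toSubmonoid, Subgroup.closure_toSubmonoid,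
    Set.union_eq_left.2 hinv] at hv

theorem apply_mem_Phi (hw : w ∈ weylGroup R) (hβ : β ∈ R.Phi) : w β ∈ R.Phi := by
  replace hw := R.mem_submonoidClosure_of_mem_WsubJ hw
  induction hw using Submonoid.closure_induction generalizing β with
  | mem s hs =>
    obtain ⟨α, hα, rfl⟩ := hs
    rw [R.refl_apply hα]
    exact R.reflect_mem α hα β hβ
  | one => exact hβ
  | mul _ _ _ _ ihx ihy => exact ihx (ihy hβ)

theorem dual_apply_WsubJ (hK : K ⊆ R.Phi) {g : Module.Dual ℝ V} (hg : ∀ α ∈ K, g α = 0)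
    (hv : v ∈ WsubJ R K) (x : V) : g (v x) = g x := by
  replace hv := R.mem_submonoidClosure_of_mem_WsubJ hv
  induction hv using Submonoid.closure_induction generalizing x with
  | mem s hs =>
    obtain ⟨α, hα, rfl⟩ := hs
    simp [R.refl_apply (hK hα), hg α hα]
  | one => rfl
  | mul _ z _ _ ihy ihz => exact (ihy (z x)).trans (ihz x)

theorem mul_refl (hw : w ∈ weylGroup R) (hα : α ∈ R.Phi) :
    w * R.refl α = R.refl (w α) * w := by
  have hwα := R.apply_mem_Phi hw hα
  have hpairing : R.pairing (w α) = R.pairing α ∘ₗ (w⁻¹ : V ≃ₗ[ℝ] V).toLinearMap := by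
    refine Module.Dual.eq_of_preReflection_mapsTo R.finite R.span_top
      (R.pairing_self _ hwα) (R.reflect_mem _ hwα) ?_ fun β hβ => ?_
    · simp [R.pairing_self α hα]
    · have h := R.apply_mem_Phi hw (R.reflect_mem α hα _ (R.apply_mem_Phi (inv_mem hw) hβ))
      simpa [Module.preReflection_apply] using h
  ext x
  simp [R.refl_apply hα, R.refl_apply hwα, hpairing]

theorem finite_weylGroup : (weylGroup R : Set (V ≃ₗ[ℝ] V)).Finite := by
  have : Finite R.Phi := R.finite
  let permute (w : weylGroup R) (β : R.Phi) : R.Phi := ⟨w.1 β, R.apply_mem_Phi w.2 β.2⟩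
  refine Finite.of_injective permute fun w w' h => Subtype.ext ?_
  refine LinearEquiv.toLinearMap_injective (LinearMap.ext_on R.span_top fun β hβ => ?_)
  exact congrArg Subtype.val (congrFun h ⟨β, hβ⟩)

end RootSystemData

/-- The sum `2ρ` of all positive roots. Since `Pos` is finite for a base, the `finsum` is then
an honest sum. -/
noncomputable def twoRho (Pos : Set V) : V := ∑ᶠ β : Pos, (β : V)

theorem map_twoRho {Pos : Set V} [Fintype Pos] (f : Module.Dual ℝ V) :
    f (twoRho Pos) = ∑ β : Pos, f β := by
  rw [twoRho, finsum_eq_sum_of_fintype, map_sum]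

/-- The positive one among `β` and `-β`, for a root `β`. -/
noncomputable def posAbs (Pos : Set V) (β : V) : V := if β ∈ Pos then β else -β

namespace IsBase

variable {R : RootSystemData V} {Pos Δ K : Set V} {α β : V} {u v w : V ≃ₗ[ℝ] V}
  {g : Module.Dual ℝ V} (hB : IsBase R Pos Δ)

include hB

theorem delta_sub_Phi : Δ ⊆ R.Phi := hB.delta_sub.trans hB.pos_sub

theorem finite_pos : Finite Pos := R.finite.subset hB.pos_sub

theorem neg_mem_pos (hβ : β ∈ R.Phi) (hn : β ∉ Pos) : -β ∈ Pos :=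
  (hB.mem_or_neg β hβ).resolve_left hn

theorem neg_notMem_pos (hβ : β ∈ Pos) : -β ∉ Pos := fun hn => hB.not_both β ⟨hβ, hn⟩

theorem WsubJ_le_weylGroup (hK : K ⊆ Δ) : WsubJ R K ≤ weylGroup R :=
  R.WsubJ_mono (hK.trans hB.delta_sub_Phi)

theorem mem_closure_of_mem_pos (hβ : β ∈ Pos) : β ∈ AddSubmonoid.closure Δ := by
  obtain ⟨c, hc, rfl⟩ := hB.decomp β hβ
  refine sum_mem fun α hα => ?_
  beta_reduce
  rw [Nat.cast_smul_eq_nsmul]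
  exact nsmul_mem (AddSubmonoid.subset_closure (hc hα)) _

theorem exists_dual_eqOn (f : V → ℝ) : ∃ g : Module.Dual ℝ V, Set.EqOn g f Δ := by
  have hindep : LinearIndepOn ℝ id Δ := hB.indep
  refine ⟨(Module.Basis.extend hindep).constr ℝ fun x => f x, fun α hα => ?_⟩
  have h := (Module.Basis.extend hindep).constr_basis ℝ (fun x => f x)
    ⟨α, hindep.subset_extend _ hα⟩
  simpa using h

theorem mem_closure_of_apply_notMem_pos (hK : K ⊆ Δ) (hv : v ∈ WsubJ R K) (hβ : β ∈ Pos)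
    (hvβ : v β ∉ Pos) : β ∈ AddSubmonoid.closure K := by
  -- This `g` is invariant under `W_K`, and a positive root is supported on `K` iff `g` kills it.
  obtain ⟨g, hg⟩ := hB.exists_dual_eqOn fun α => if α ∈ K then 0 else 1
  have hgΔ : ∀ α ∈ Δ, 0 ≤ g α := fun α hα => by rw [hg hα]; dsimp only; split_ifs <;> simp
  have hgpos : ∀ γ ∈ Pos, 0 ≤ g γ := fun γ hγ =>
    map_nonneg_of_mem_closure hgΔ (hB.mem_closure_of_mem_pos hγ)
  have hgv : g (v β) = g β :=
    R.dual_apply_WsubJ (hK.trans hB.delta_sub_Phi) (fun α hα => by simp [hg (hK hα), hα]) hv β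
  have hvβ' : -v β ∈ Pos :=
    hB.neg_mem_pos (R.apply_mem_Phi (hB.WsubJ_le_weylGroup hK hv) (hB.pos_sub hβ)) hvβ
  have hgβ : g β = 0 := by
    have := hgpos _ hvβ'
    rw [map_neg, hgv] at this
    linarith [hgpos β hβ]
  refine mem_closure_of_map_eq_zero hgΔ (fun α hα h0 => ?_) (hB.mem_closure_of_mem_pos hβ) hgβ
  by_contra hαK
  simp [hg hα, hαK] at h0

theorem eq_of_refl_apply_notMem_pos (hα : α ∈ Δ) (hβ : β ∈ Pos) (hn : R.refl α β ∉ Pos) :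
    β = α := by
  have hmem := hB.mem_closure_of_apply_notMem_pos (Set.singleton_subset_iff.2 hα)
    (R.refl_mem_WsubJ rfl) hβ hn
  obtain ⟨n, rfl⟩ := AddSubmonoid.mem_closure_singleton.1 hmem
  have hΦ : (n : ℝ) • α ∈ R.Phi := by
    rw [Nat.cast_smul_eq_nsmul]
    exact hB.pos_sub hβ
  rcases R.reduced α (hB.delta_sub_Phi hα) _ hΦ with h | h
  · rw [Nat.cast_eq_one.1 h, one_smul]
  · linarith [n.cast_nonneg (α := ℝ)]

theorem exists_prod_eraseIdx_eq (hα : α ∈ Δ) {l : List (V ≃ₗ[ℝ] V)}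
    (hl : ∀ s ∈ l, s ∈ refls R Δ) (hn : l.prod α ∉ Pos) :
    ∃ i < l.length, (l.eraseIdx i).prod = l.prod * R.refl α := by
  induction l with
  | nil => exact absurd (hB.delta_sub hα) hn
  | cons s l ih =>
    rw [List.forall_mem_cons] at hl
    obtain ⟨⟨γ, hγ, rfl⟩, hl⟩ := hl
    by_cases hp : l.prod α ∈ Pos
    · have hγα : l.prod α = γ := hB.eq_of_refl_apply_notMem_pos hγ hp (by simpa using hn)
      have hw : l.prod ∈ weylGroup R := hB.WsubJ_le_weylGroup subset_rfl
        (list_prod_mem fun s hs => Subgroup.subset_closure (hl s hs))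
      refine ⟨0, by simp, ?_⟩
      rw [List.eraseIdx_zero, List.tail_cons, List.prod_cons, mul_assoc,
        R.mul_refl hw (hB.delta_sub_Phi hα), hγα, ← mul_assoc, R.refl_mul_self, one_mul]
    · obtain ⟨i, hi, hprod⟩ := ih hl hp
      exact ⟨i + 1, by simpa using hi, by simp [hprod, mul_assoc]⟩

theorem len_mul_refl_lt (hw : w ∈ WsubJ R Δ) (hα : α ∈ Δ) (hn : w α ∉ Pos) :
    len R Δ (w * R.refl α) < len R Δ w := by
  obtain ⟨l, hl, rfl, hlen⟩ := exists_reduced_word (R.mem_submonoidClosure_of_mem_WsubJ hw)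
  obtain ⟨i, hi, hprod⟩ := hB.exists_prod_eraseIdx_eq hα hl hn
  calc len R Δ (l.prod * R.refl α) = len R Δ (l.eraseIdx i).prod := by rw [hprod]
    _ ≤ (l.eraseIdx i).length := lengthWrt_prod_le fun s hs => hl s (List.mem_of_mem_eraseIdx hs)
    _ < l.length := by rw [List.length_eraseIdx_of_lt hi]; omega
    _ = len R Δ l.prod := hlen

theorem exists_apply_notMem_pos (hv : v ∈ WsubJ R Δ) (hv1 : v ≠ 1) : ∃ α ∈ Δ, v α ∉ Pos := by
  obtain ⟨l, hl, rfl, hlen⟩ := exists_reduced_word (R.mem_submonoidClosure_of_mem_WsubJ hv)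
  obtain rfl | ⟨l, s, rfl⟩ := l.eq_nil_or_concat'
  · exact absurd List.prod_nil hv1
  rw [List.forall_mem_append, List.forall_mem_singleton] at hl
  obtain ⟨hl, α, hα, rfl⟩ := hl
  rw [List.prod_append, List.prod_singleton] at hlen ⊢
  refine ⟨α, hα, fun hp => ?_⟩
  have hn : l.prod α ∉ Pos := fun h => by
    simp [R.refl_apply_self (hB.delta_sub_Phi hα), hB.neg_notMem_pos h] at hp
  have hlt := hB.len_mul_refl_lt
    (list_prod_mem fun s hs => Subgroup.subset_closure (hl s hs)) hα hn
  have hle : len R Δ l.prod ≤ l.length := lengthWrt_prod_le hl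
  rw [List.length_append, List.length_singleton] at hlen
  change _ = len R Δ _ at hlen
  omega

theorem exists_perm_eq_posAbs (hw : w ∈ weylGroup R) :
    ∃ σ : Equiv.Perm Pos, ∀ β : Pos, (σ β : V) = posAbs Pos (w β) := by
  have := hB.finite_pos
  have hmem (β : Pos) : posAbs Pos (w β) ∈ Pos := by
    unfold posAbs
    split_ifs with h
    · exact h
    · exact hB.neg_mem_pos (R.apply_mem_Phi hw (hB.pos_sub β.2)) h
  let f (β : Pos) : Pos := ⟨posAbs Pos (w β), hmem β⟩
  have hf : Function.Injective f := fun β γ h => by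
    have h' : posAbs Pos (w β) = posAbs Pos (w γ) := congrArg Subtype.val h
    have hne : (β : V) ≠ -γ := fun h => hB.neg_notMem_pos γ.2 (h ▸ β.2)
    have hne' : -(β : V) ≠ γ := fun h => hB.neg_notMem_pos β.2 (h ▸ γ.2)
    refine Subtype.ext (w.injective ?_)
    unfold posAbs at h'
    split_ifs at h'
    · exact h'
    · exact absurd (w.injective (by simpa using h')) hne
    · exact absurd (w.injective (by simpa using h')) hne'
    · exact neg_injective h'
  exact ⟨.ofBijective f (Finite.injective_iff_bijective.1 hf), fun _ => rfl⟩

theorem apply_twoRho_lt (hK : K ⊆ Δ) (hv : v ∈ WsubJ R K) (hv1 : v ≠ 1)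
    (hg : ∀ α ∈ K, 0 < g α) : g (v (twoRho Pos)) < g (twoRho Pos) := by
  have := hB.finite_pos
  have := Fintype.ofFinite Pos
  have hvW := hB.WsubJ_le_weylGroup hK hv
  obtain ⟨σ, hσ⟩ := hB.exists_perm_eq_posAbs hvW
  have hlt (β : Pos) (hn : v β ∉ Pos) : g (v β) < g (posAbs Pos (v β)) := by
    have hpos : -v β ∈ Pos := hB.neg_mem_pos (R.apply_mem_Phi hvW (hB.pos_sub β.2)) hn
    have hmem : -v β ∈ AddSubmonoid.closure K :=
      hB.mem_closure_of_apply_notMem_pos hK (inv_mem hv) hpos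
        (by simpa using hB.neg_notMem_pos β.2)
    have := map_pos_of_mem_closure hg hmem (R.ne_zero_of_mem_Phi (hB.pos_sub hpos))
    rw [posAbs, if_neg hn]
    rw [map_neg] at this ⊢
    linarith
  obtain ⟨α, hα, hvα⟩ := hB.exists_apply_notMem_pos (R.WsubJ_mono hK hv) hv1
  calc g (v (twoRho Pos)) = ∑ β : Pos, g (v β) := map_twoRho (g ∘ₗ v.toLinearMap)
    _ < ∑ β : Pos, g (posAbs Pos (v β)) := by
      refine Finset.sum_lt_sum (fun β _ => ?_) ⟨⟨α, hB.delta_sub hα⟩, Finset.mem_univ _, hlt _ hvα⟩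
      by_cases h : v β ∈ Pos
      · rw [posAbs, if_pos h]
      · exact (hlt β h).le
    _ = ∑ β : Pos, g β := by simp_rw [← hσ]; exact Equiv.sum_comp σ fun β : Pos => g β
    _ = g (twoRho Pos) := (map_twoRho g).symm

theorem dual_pos_of_mem_pos (hg : ∀ α ∈ Δ, 0 < g α) (hβ : β ∈ Pos) : 0 < g β :=
  map_pos_of_mem_closure hg (hB.mem_closure_of_mem_pos hβ)
    (R.ne_zero_of_mem_Phi (hB.pos_sub hβ))

theorem apply_mul_twoRho_lt (hK : K ⊆ Δ) (hg : ∀ α ∈ Δ, 0 < g α) (hw : ∀ α ∈ K, w α ∈ Pos)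
    (hv : v ∈ WsubJ R K) (hv1 : v ≠ 1) : g ((w * v) (twoRho Pos)) < g (w (twoRho Pos)) :=
  hB.apply_twoRho_lt (g := g ∘ₗ w.toLinearMap) hK hv hv1 fun α hα =>
    hB.dual_pos_of_mem_pos (g := g) hg (hw α hα)

theorem lt_apply_mul_twoRho (hK : K ⊆ Δ) (hg : ∀ α ∈ Δ, 0 < g α) (hwW : w ∈ weylGroup R)
    (hw : ∀ α ∈ K, w α ∉ Pos) (hv : v ∈ WsubJ R K) (hv1 : v ≠ 1) :
    g (w (twoRho Pos)) < g ((w * v) (twoRho Pos)) := by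
  have h := hB.apply_twoRho_lt (g := -(g ∘ₗ w.toLinearMap)) hK hv hv1 fun α hα => by
    have hneg := hB.neg_mem_pos (R.apply_mem_Phi hwW (hB.delta_sub_Phi (hK hα))) (hw α hα)
    simpa using hB.dual_pos_of_mem_pos hg hneg
  simpa using h

theorem exists_dual_pos : ∃ g : Module.Dual ℝ V, ∀ α ∈ Δ, 0 < g α := by
  obtain ⟨g, hg⟩ := hB.exists_dual_eqOn 1
  exact ⟨g, fun α hα => by simp [hg hα]⟩

theorem eq_of_mem_WupJ (hK : K ⊆ Δ) (hu : u ∈ WupJ R Pos K) (hw : w ∈ WupJ R Pos K)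
    (h : u⁻¹ * w ∈ WsubJ R K) : u = w := by
  by_contra hne
  obtain ⟨g, hg⟩ := hB.exists_dual_pos
  have hlt := hB.apply_mul_twoRho_lt hK hg hu.2 h (mt inv_mul_eq_one.1 hne)
  have hgt := hB.apply_mul_twoRho_lt hK hg hw.2 (inv_mem h)
    (mt inv_eq_one.1 (mt inv_mul_eq_one.1 hne))
  rw [mul_inv_cancel_left] at hlt
  rw [mul_inv_rev, inv_inv, mul_inv_cancel_left] at hgt
  exact lt_asymm hlt hgt

end IsBase

namespace RootSystemData

theorem det_refl (R : RootSystemData V) {α : V} (hα : α ∈ R.Phi) :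
    LinearEquiv.det (R.refl α) = -1 := by
  have := R.module_finite
  have htransvection : (R.refl α).toLinearMap = LinearMap.transvection (R.pairing α) (-α) := by
    ext x
    simp [R.refl_apply hα, LinearMap.transvection.apply, sub_eq_add_neg]
  ext
  rw [LinearEquiv.coe_det, htransvection, LinearMap.transvection.det, map_neg,
    R.pairing_self α hα]
  norm_num

theorem refl_ne_one (R : RootSystemData V) {α : V} (hα : α ∈ R.Phi) : R.refl α ≠ 1 := fun h => by
  have hdet := R.det_refl hα
  rw [h, map_one] at hdet
  norm_num [Units.ext_iff] at hdet

end RootSystemData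

namespace IsBase

variable {R : RootSystemData V} {Pos Δ K : Set V} {α : V} {v : V ≃ₗ[ℝ] V}
  (hB : IsBase R Pos Δ)

include hB

theorem det_eq_neg_one_pow_len (hv : v ∈ WsubJ R Δ) :
    LinearEquiv.det v = (-1) ^ len R Δ v := by
  obtain ⟨l, hl, rfl, hlen⟩ := exists_reduced_word (R.mem_submonoidClosure_of_mem_WsubJ hv)
  rw [map_list_prod, len, ← hlen, ← List.length_map (f := LinearEquiv.det)]
  refine List.prod_eq_pow_card _ _ (List.forall_mem_map.2 fun s hs => ?_)
  obtain ⟨α, hα, rfl⟩ := hl s hs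
  exact R.det_refl (hB.delta_sub_Phi hα)

theorem neg_one_pow_len_mul_refl (hv : v ∈ WsubJ R Δ) (hα : α ∈ Δ) :
    (-1 : ℚ) ^ len R Δ (v * R.refl α) = -(-1) ^ len R Δ v := by
  have hdet : (-1 : ℝˣ) ^ len R Δ (v * R.refl α) = -(-1) ^ len R Δ v := by
    rw [← hB.det_eq_neg_one_pow_len (mul_mem hv (R.refl_mem_WsubJ hα)), map_mul,
      R.det_refl (hB.delta_sub_Phi hα), hB.det_eq_neg_one_pow_len hv, mul_neg_one]
  have hdet' := congrArg Units.val hdet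
  push_cast at hdet'
  exact_mod_cast hdet'

theorem sum_neg_one_pow_len_mul_eq_zero [Fintype (WsubJ R K)] (hK : K ⊆ Δ) (hα : α ∈ K)
    {F : (V ≃ₗ[ℝ] V) → ℚ} (hF : ∀ v, F (v * R.refl α) = F v) :
    ∑ v : WsubJ R K, (-1) ^ len R Δ (v : V ≃ₗ[ℝ] V) * F v = 0 := by
  let s : WsubJ R K := ⟨R.refl α, R.refl_mem_WsubJ hα⟩
  refine Finset.sum_involution (fun v _ => v * s) (fun v _ => ?_) (fun v _ _ hvs => ?_)
    (fun _ _ => Finset.mem_univ _) fun v _ => Subtype.ext ?_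
  · rw [Subgroup.coe_mul, hB.neg_one_pow_len_mul_refl (R.WsubJ_mono hK v.2) (hK hα), hF]
    ring
  · exact R.refl_ne_one (hB.delta_sub_Phi (hK hα)) (congrArg Subtype.val (mul_eq_left.1 hvs))
  · simp [s, mul_assoc, R.refl_mul_self]

end IsBase

section Cokernel

variable {R : RootSystemData V} {Pos Δ J K : Set V}

theorem finite_WupJ (R : RootSystemData V) (Pos J : Set V) : Finite (WupJ R Pos J) :=
  R.finite_weylGroup.subset fun _ hw => hw.1

theorem IsBase.finite_WsubJ (hB : IsBase R Pos Δ) (hK : K ⊆ Δ) : Finite (WsubJ R K) :=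
  R.finite_weylGroup.subset (hB.WsubJ_le_weylGroup hK)

theorem IsBase.finite_delta_diff (hB : IsBase R Pos Δ) (J : Set V) : Finite ↥(Δ \ J) :=
  R.finite.subset (Set.sdiff_subset.trans hB.delta_sub_Phi)

theorem IsBase.finite_MJdom (hB : IsBase R Pos Δ) (J : Set V) : Finite (MJdom R Pos Δ J) := by
  have := hB.finite_delta_diff J
  have (a : ↥(Δ \ J)) := finite_WupJ R Pos (J ∪ {(a : V)})
  exact inferInstanceAs (Finite (Σ a : ↥(Δ \ J), WupJ R Pos (J ∪ {(a : V)})))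

theorem MJd_single_apply (R : RootSystemData V) (Pos Δ J : Set V) (L : Type) [CommRing L]
    (x : MJdom R Pos Δ J) (u : WupJ R Pos J) :
    MJd R Pos Δ J L (.single x 1) u =
      if (x.2 : V ≃ₗ[ℝ] V)⁻¹ * u ∈ WsubJ R (J ∪ {(x.1 : V)}) then 1 else 0 := by
  have := finite_WupJ R Pos J
  simp only [MJd, Finsupp.lift_apply, Finsupp.sum_single_index, zero_smul, one_smul,
    finsum_ite_single_apply, smul_subset_smul_iff (R.WsubJ_mono Set.subset_union_left)]

theorem IsBase.MJdstar_single_apply (hB : IsBase R Pos Δ) (x : MJdom R Pos Δ J)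
    (u : WupJ R Pos J) :
    MJdstar R Pos Δ J (.single u 1) x =
      if (x.2 : V ≃ₗ[ℝ] V)⁻¹ * u ∈ WsubJ R (J ∪ {(x.1 : V)}) then 1 else 0 := by
  have := hB.finite_delta_diff J
  have (a : ↥(Δ \ J)) := finite_WupJ R Pos (J ∪ {(a : V)})
  have := hB.finite_MJdom J
  simp only [MJdstar, Finsupp.lift_apply, Finsupp.sum_single_index, zero_smul, one_smul,
    leftCoset_eq_iff]
  rw [← finsum_sigma_of_finite]
  exact finsum_ite_single_apply (fun x : MJdom R Pos Δ J =>
    (x.2 : V ≃ₗ[ℝ] V)⁻¹ * u ∈ WsubJ R (J ∪ {(x.1 : V)})) 1 x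

theorem IsBase.finrank_ker_MJdstar (hB : IsBase R Pos Δ) (J : Set V) :
    Module.finrank ℚ (LinearMap.ker (MJdstar R Pos Δ J)) =
      Module.finrank ℚ (MJmod R Pos Δ J ℚ) := by
  have := finite_WupJ R Pos J
  have := hB.finite_MJdom J
  exact finrank_ker_eq_finrank_coker_of_adjoint fun u x => by
    rw [hB.MJdstar_single_apply, MJd_single_apply]

end Cokernel

section Sigma

variable {R : RootSystemData V} {Pos Δ J : Set V} {pJ : (V ≃ₗ[ℝ] V) → (V ≃ₗ[ℝ] V)}
  {v w : V ≃ₗ[ℝ] V}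

/-- The minimal representative `(w)^J` of the coset `w W_J`, as an element of `W^J`. -/
def IsProjJ.minRep (hpJ : IsProjJ R Pos J pJ) (w : weylGroup R) : WupJ R Pos J :=
  ⟨pJ w, (hpJ w w.2).1⟩

theorem IsProjJ.eq_self_of_mem_WupJ (hpJ : IsProjJ R Pos J pJ) (hB : IsBase R Pos Δ) (hJ : J ⊆ Δ)
    (hw : w ∈ WupJ R Pos J) : pJ w = w :=
  hB.eq_of_mem_WupJ hJ (hpJ w hw.1).1 hw (hpJ w hw.1).2

theorem IsProjJ.apply_twoRho_le_proj (hpJ : IsProjJ R Pos J pJ) (hB : IsBase R Pos Δ) (hJ : J ⊆ Δ)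
    {g : Module.Dual ℝ V} (hg : ∀ α ∈ Δ, 0 < g α) (hw : w ∈ weylGroup R) :
    g (w (twoRho Pos)) ≤ g (pJ w (twoRho Pos)) := by
  obtain ⟨hmin, hcoset⟩ := hpJ w hw
  by_cases h1 : (pJ w)⁻¹ * w = 1
  · rw [inv_mul_eq_one.1 h1]
  · have h := hB.apply_mul_twoRho_lt hJ hg hmin.2 hcoset h1
    rw [mul_inv_cancel_left] at h
    exact h.le

theorem apply_notMem_pos_of_mem_VupJ (hw : w ∈ VupJ R Pos Δ J) {α : V} (hα : α ∈ Δ \ J) :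
    w α ∉ Pos := fun hp => by
  refine hw.2 α hα.1 hα.2 ⟨hw.1.1, fun β hβ => ?_⟩
  rcases hβ with hβ | rfl
  · exact hw.1.2 β hβ
  · exact hp

theorem IsProjJ.apply_twoRho_lt_proj_mul (hpJ : IsProjJ R Pos J pJ) (hB : IsBase R Pos Δ)
    (hJ : J ⊆ Δ) {g : Module.Dual ℝ V} (hg : ∀ α ∈ Δ, 0 < g α) (hw : w ∈ VupJ R Pos Δ J)
    (hv : v ∈ WsubJ R (Δ \ J)) (hv1 : v ≠ 1) :
    g (w (twoRho Pos)) < g (pJ (w * v) (twoRho Pos)) :=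
  (hB.lt_apply_mul_twoRho Set.sdiff_subset hg hw.1.1
    (fun _ => apply_notMem_pos_of_mem_VupJ hw) hv hv1).trans_le
    (hpJ.apply_twoRho_le_proj hB hJ hg (mul_mem hw.1.1 (hB.WsubJ_le_weylGroup Set.sdiff_subset hv)))

theorem sigmaVec_eq_sum (hpJ : IsProjJ R Pos J pJ) (hB : IsBase R Pos Δ)
    [Fintype (WsubJ R (Δ \ J))] (w : weylGroup R) :
    sigmaVec R Pos Δ J pJ w = ∑ v : WsubJ R (Δ \ J), (-1 : ℚ) ^ len R Δ (v : V ≃ₗ[ℝ] V) •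
      Finsupp.single
        (hpJ.minRep (w * Subgroup.inclusion (hB.WsubJ_le_weylGroup Set.sdiff_subset) v)) 1 := by
  rw [sigmaVec, finsum_eq_sum_of_fintype]
  refine Finset.sum_congr rfl fun v _ => ?_
  rw [finsum_eq_single _
    (hpJ.minRep (w * Subgroup.inclusion (hB.WsubJ_le_weylGroup Set.sdiff_subset) v))]
  · exact if_pos rfl
  · exact fun u hu => if_neg fun h => hu (Subtype.ext h)

theorem sigmaVec_apply (hpJ : IsProjJ R Pos J pJ) (hB : IsBase R Pos Δ)
    [Fintype (WsubJ R (Δ \ J))] (hw : w ∈ weylGroup R) (u : WupJ R Pos J) :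
    sigmaVec R Pos Δ J pJ w u = ∑ v : WsubJ R (Δ \ J),
      if pJ (w * v) = u then (-1 : ℚ) ^ len R Δ (v : V ≃ₗ[ℝ] V) else 0 := by
  rw [sigmaVec_eq_sum hpJ hB ⟨w, hw⟩, Finsupp.finsetSum_apply]
  refine Finset.sum_congr rfl fun v _ => ?_
  simp [Finsupp.single_apply, IsProjJ.minRep, Subtype.ext_iff]

theorem MJdstar_sigmaVec_eq_zero (hpJ : IsProjJ R Pos J pJ) (hB : IsBase R Pos Δ)
    (hw : w ∈ weylGroup R) : MJdstar R Pos Δ J (sigmaVec R Pos Δ J pJ w) = 0 := by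
  have := hB.finite_WsubJ (K := Δ \ J) Set.sdiff_subset
  have := Fintype.ofFinite (WsubJ R (Δ \ J))
  ext x
  rw [sigmaVec_eq_sum hpJ hB ⟨w, hw⟩, map_sum, Finsupp.finsetSum_apply, Finsupp.zero_apply,
    ← hB.sum_neg_one_pow_len_mul_eq_zero Set.sdiff_subset x.1.2
      (F := fun v => if (x.2 : V ≃ₗ[ℝ] V)⁻¹ * (w * v) ∈ WsubJ R (J ∪ {(x.1 : V)}) then 1 else 0)
      fun v => ?_]
  · refine Finset.sum_congr rfl fun v _ => ?_
    have hmin := (hpJ (w * v) (mul_mem hw (hB.WsubJ_le_weylGroup Set.sdiff_subset v.2))).2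
    rw [map_smul, Finsupp.smul_apply, smul_eq_mul, hB.MJdstar_single_apply]
    congr 2
    rw [← mul_inv_cancel_left (pJ (w * v)) (w * v), ← mul_assoc (x.2 : V ≃ₗ[ℝ] V)⁻¹,
      mul_mem_cancel_right (R.WsubJ_mono Set.subset_union_left hmin)]
    rfl
  · rw [← mul_assoc w, ← mul_assoc _ (w * v),
      mul_mem_cancel_right (R.refl_mem_WsubJ (Set.mem_union_right J (Set.mem_singleton _)))]

theorem eq_or_lt_of_sigmaVec_apply_ne_zero (hpJ : IsProjJ R Pos J pJ) (hB : IsBase R Pos Δ)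
    (hJ : J ⊆ Δ) {g : Module.Dual ℝ V} (hg : ∀ α ∈ Δ, 0 < g α) (hw : w ∈ VupJ R Pos Δ J)
    {u : WupJ R Pos J} (hu : sigmaVec R Pos Δ J pJ w u ≠ 0) :
    w = u ∨ g (w (twoRho Pos)) < g ((u : V ≃ₗ[ℝ] V) (twoRho Pos)) := by
  have := hB.finite_WsubJ (K := Δ \ J) Set.sdiff_subset
  have := Fintype.ofFinite (WsubJ R (Δ \ J))
  rw [sigmaVec_apply hpJ hB hw.1.1] at hu
  obtain ⟨v, -, hv⟩ := Finset.exists_ne_zero_of_sum_ne_zero hu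
  rw [← (ite_ne_right_iff.1 hv).1]
  by_cases hv1 : (v : V ≃ₗ[ℝ] V) = 1
  · left
    rw [hv1, mul_one, hpJ.eq_self_of_mem_WupJ hB hJ hw.1]
  · exact .inr (hpJ.apply_twoRho_lt_proj_mul hB hJ hg hw v.2 hv1)

theorem sigmaVec_apply_self (hpJ : IsProjJ R Pos J pJ) (hB : IsBase R Pos Δ) (hJ : J ⊆ Δ)
    (hw : w ∈ VupJ R Pos Δ J) : sigmaVec R Pos Δ J pJ w ⟨w, hw.1⟩ = 1 := by
  have := hB.finite_WsubJ (K := Δ \ J) Set.sdiff_subset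
  have := Fintype.ofFinite (WsubJ R (Δ \ J))
  obtain ⟨g, hg⟩ := hB.exists_dual_pos
  rw [sigmaVec_apply hpJ hB hw.1.1, Finset.sum_eq_single_of_mem 1 (Finset.mem_univ _)]
  · simp [hpJ.eq_self_of_mem_WupJ hB hJ hw.1, len, lengthWrt_one]
  · refine fun v _ hv1 => if_neg fun h => ?_
    have hlt := hpJ.apply_twoRho_lt_proj_mul hB hJ hg hw v.2 (mt OneMemClass.coe_eq_one.1 hv1)
    rw [h] at hlt
    exact hlt.false

theorem linearIndependent_sigmaVec (hpJ : IsProjJ R Pos J pJ) (hB : IsBase R Pos Δ)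
    (hJ : J ⊆ Δ) :
    LinearIndependent ℚ fun w : VupJ R Pos Δ J => sigmaVec R Pos Δ J pJ (w : V ≃ₗ[ℝ] V) := by
  obtain ⟨g, hg⟩ := hB.exists_dual_pos
  refine linearIndependent_of_triangular (fun w => ⟨w, w.2.1⟩)
    (fun w => g ((w : V ≃ₗ[ℝ] V) (twoRho Pos))) (fun w => ?_) fun w w' hne => ?_
  · rw [sigmaVec_apply_self hpJ hB hJ w.2]
    exact one_ne_zero
  · exact (eq_or_lt_of_sigmaVec_apply_ne_zero hpJ hB hJ hg w'.2 hne).imp_left Subtype.ext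

end Sigma

/-- The family `{σ(w') : w' ∈ V^J}` is linearly independent over `ℚ` and
is contained in the kernel of the dual map `∂*`; consequently
`dim_ℚ M_J(ℚ) ≥ |V^J|`. -/
theorem statement_13 {V : Type} [AddCommGroup V] [Module ℝ V]
    (R : RootSystemData V) (Pos Δ : Set V) (hBase : IsBase R Pos Δ)
    (J : Set V) (hJ : J ⊆ Δ)
    (pJ : (V ≃ₗ[ℝ] V) → (V ≃ₗ[ℝ] V)) (hpJ : IsProjJ R Pos J pJ) :
    LinearIndependent ℚ
      (fun w' : ↥(VupJ R Pos Δ J) => sigmaVec R Pos Δ J pJ (w' : V ≃ₗ[ℝ] V)) ∧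
    (∀ w' : ↥(VupJ R Pos Δ J),
      MJdstar R Pos Δ J (sigmaVec R Pos Δ J pJ (w' : V ≃ₗ[ℝ] V)) = 0) ∧
    (VupJ R Pos Δ J).ncard ≤ Module.finrank ℚ (MJmod R Pos Δ J ℚ) := by
  have hindep := linearIndependent_sigmaVec hpJ hBase hJ
  have hker (w' : VupJ R Pos Δ J) :
      MJdstar R Pos Δ J (sigmaVec R Pos Δ J pJ (w' : V ≃ₗ[ℝ] V)) = 0 :=
    MJdstar_sigmaVec_eq_zero hpJ hBase w'.2.1.1
  refine ⟨hindep, hker, ?_⟩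
  have := finite_WupJ R Pos J
  let sigmaKer (w' : VupJ R Pos Δ J) : LinearMap.ker (MJdstar R Pos Δ J) := ⟨_, hker w'⟩
  have hindepKer : LinearIndependent ℚ sigmaKer := .of_comp (Submodule.subtype _) hindep
  have := hindepKer.finite
  have := Fintype.ofFinite (VupJ R Pos Δ J)
  calc (VupJ R Pos Δ J).ncard = Fintype.card (VupJ R Pos Δ J) := by
        rw [← Nat.card_coe_set_eq, Nat.card_eq_fintype_card]
    _ ≤ Module.finrank ℚ (LinearMap.ker (MJdstar R Pos Δ J)) :=
      hindepKer.fintype_card_le_finrank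
    _ = Module.finrank ℚ (MJmod R Pos Δ J ℚ) := hBase.finrank_ker_MJdstar J

end PaperSp
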